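/- Let Λ be a noetherian ring and e ∈ Λ an idempotent. Then gldim Λ ≤ gldim(eΛe) + gldim(Λ/ΛeΛ) + pd_Λ(Λ/ΛeΛ) + 1, where pd denotes projective dimension of the left Λ-module Λ/ΛeΛ. -/

import Mathlib

open CategoryTheory
universe u
noncomputable section

/-- A linear map factors through a projective module. -/
def FactorsThroughProjective {R : Type u} [Ring R] {M N : Type u}
    [AddCommGroup M] [AddCommGroup N] [Module R M] [Module R N] (f : M →ₗ[R] N) : Prop :=
  ∃ (P : Type u) (_ : AddCommGroup P) (_ : Module R P), Module.Projective R P ∧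
    ∃ (g : M →ₗ[R] P) (h : P →ₗ[R] N), h.comp g = f

/-- `Ext^i_R(X, Y) = 0`. -/
def extZero (R : Type u) [CommRing R] (i : ℕ) (X Y : ModuleCat.{u} R) : Prop :=
  Subsingleton (((Ext R (ModuleCat.{u} R) i).obj (Opposite.op X)).obj Y)

/-- `Y` is an `n`-th syzygy of `N` (via finitely generated projective modules). -/
def IsSyzygy (R : Type u) [CommRing R] : ℕ → ModuleCat.{u} R → ModuleCat.{u} R → Prop
  | 0, Y, N => Nonempty (Y ≅ N)
  | n+1, Y, N => ∃ (P K : ModuleCat.{u} R) (i : Y ⟶ P) (p : P ⟶ K),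
      Projective P ∧ Module.Finite R P ∧ Function.Injective i ∧ Function.Surjective p ∧
      Function.Exact i p ∧ IsSyzygy R n K N

/-- projective dimension at most `n` -/
def pdLE (A : Type u) [Ring A] : ℕ → ModuleCat.{u} A → Prop
  | 0, M => Projective M
  | n+1, M => Projective M ∨ ∃ (K P : ModuleCat.{u} A) (i : K ⟶ P) (p : P ⟶ M),
      Projective P ∧ Function.Injective i ∧ Function.Surjective p ∧
      Function.Exact i p ∧ pdLE A n K

/-- global dimension at most `n` -/
def gldimLE (A : Type u) [Ring A] (n : ℕ) : Prop := ∀ M : ModuleCat.{u} A, pdLE A n M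

/-- `M` is `d`-torsionfree: it is a `d`-th syzygy of a finitely generated module `N`
with `Ext^i(N,R) = 0` for `1 ≤ i ≤ d`. -/
def IsTorsionFree (R : Type u) [CommRing R] (d : ℕ) (M : ModuleCat.{u} R) : Prop :=
  ∃ N : ModuleCat.{u} R, Module.Finite R N ∧
    (∀ i, 1 ≤ i → i ≤ d → extZero R i N (ModuleCat.of R R)) ∧ IsSyzygy R d M N

/-- `N` lies in `add M`: it is a direct summand of a finite direct sum of copies of `M`. -/
def MemAdd (R : Type u) [CommRing R] (M N : ModuleCat.{u} R) : Prop :=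
  ∃ (k : ℕ) (i : N →ₗ[R] (Fin k → M)) (p : (Fin k → M) →ₗ[R] N), p.comp i = LinearMap.id

section Corner
variable {Λ : Type u} [Ring Λ] {e : Λ}

/-- The corner `eΛe` as a non-unital subring. -/
def cornerSubring (he : IsIdempotentElem e) : NonUnitalSubring Λ where
  carrier := {x | e * x * e = x}
  zero_mem' := by simp
  add_mem' := by intro x y hx hy; simp only [Set.mem_setOf_eq] at *; rw [mul_add, add_mul, hx, hy]
  neg_mem' := by intro x hx; simp only [Set.mem_setOf_eq] at *; rw [mul_neg, neg_mul, hx]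
  mul_mem' := by
    intro x y hx hy; simp only [Set.mem_setOf_eq] at *
    have hx' : e * x = x := by
      conv_lhs => rw [← hx]
      rw [← mul_assoc, ← mul_assoc, he.eq, hx]
    have hy' : y * e = y := by
      conv_lhs => rw [← hy]
      rw [mul_assoc, he.eq, hy]
    calc e * (x * y) * e = (e * x) * (y * e) := by rw [← mul_assoc, mul_assoc]
      _ = x * y := by rw [hx', hy']

lemma corner_left (he : IsIdempotentElem e) (x : cornerSubring he) : e * (x : Λ) = x := by
  conv_lhs => rw [← x.2]
  rw [← mul_assoc, ← mul_assoc, he.eq, x.2]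

lemma corner_right (he : IsIdempotentElem e) (x : cornerSubring he) : (x : Λ) * e = x := by
  conv_lhs => rw [← x.2]
  rw [mul_assoc, he.eq, x.2]

/-- The ring structure on the corner `eΛe`, with unit `e`. -/
def cornerRing (he : IsIdempotentElem e) : Ring (cornerSubring he) :=
  { (inferInstance : NonUnitalRing (cornerSubring he)) with
    one := ⟨e, show e * e * e = e by rw [he.eq, he.eq]⟩
    one_mul := fun x => Subtype.ext (corner_left he x)
    mul_one := fun x => Subtype.ext (corner_right he x) }

end Corner

/-- The left `Λ`-module structure on the quotient of `Λ` by a two-sided ideal. -/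
def quotSpanModule (A : Type u) [Ring A] (I : TwoSidedIdeal A) :
    Module A I.ringCon.Quotient :=
  Module.compHom _ I.ringCon.mk'

/-- Unbundled projective dimension `< n`. -/
abbrev PDLT (R : Type u) [Ring R] (M : Type u) [AddCommGroup M] [Module R M] (n : ℕ) : Prop :=
  HasProjectiveDimensionLT (ModuleCat.of R M) n

section PD
variable {R : Type u} [Ring R] {A B C : Type u} [AddCommGroup A] [AddCommGroup B] [AddCommGroup C]
  [Module R A] [Module R B] [Module R C]

lemma pdlt_one_iff : PDLT R A 1 ↔ Module.Projective R A := by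
  rw [PDLT, ← projective_iff_hasProjectiveDimensionLT_one, ← IsProjective.iff_projective]

lemma ses_of (f : A →ₗ[R] B) (g : B →ₗ[R] C) (hf : Function.Injective f)
    (hg : Function.Surjective g) (h : Function.Exact f g) :
    (ShortComplex.mk (ModuleCat.ofHom f) (ModuleCat.ofHom g)
      (by ext x; exact h.apply_apply_eq_zero x)).ShortExact where
  exact := by
    rw [ShortComplex.ShortExact.moduleCat_exact_iff_function_exact]
    exact h
  mono_f := (ModuleCat.mono_iff_injective _).2 hf
  epi_g := (ModuleCat.epi_iff_surjective _).2 hg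

lemma pd_mid (f : A →ₗ[R] B) (g : B →ₗ[R] C) (hf : Function.Injective f)
    (hg : Function.Surjective g) (h : Function.Exact f g) (n : ℕ)
    (h1 : PDLT R A n) (h3 : PDLT R C n) : PDLT R B n :=
  (ses_of f g hf hg h).hasProjectiveDimensionLT_X₂ n h1 h3

lemma pd_right (f : A →ₗ[R] B) (g : B →ₗ[R] C) (hf : Function.Injective f)
    (hg : Function.Surjective g) (h : Function.Exact f g) (n : ℕ)
    (h1 : PDLT R A n) (h2 : PDLT R B (n+1)) : PDLT R C (n+1) :=
  (ses_of f g hf hg h).hasProjectiveDimensionLT_X₃ n h1 h2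

lemma pd_left (f : A →ₗ[R] B) (g : B →ₗ[R] C) (hf : Function.Injective f)
    (hg : Function.Surjective g) (h : Function.Exact f g) (n : ℕ)
    (h2 : PDLT R B n) (h3 : PDLT R C (n+1)) : PDLT R A n :=
  (ses_of f g hf hg h).hasProjectiveDimensionLT_X₁ n h2 h3

lemma pd_ge {n m : ℕ} (h : PDLT R A n) (hnm : n ≤ m) : PDLT R A m :=
  hasProjectiveDimensionLT_of_ge _ n m hnm

lemma pd_proj (h : Module.Projective R A) (n : ℕ) : PDLT R A (n+1) :=
  pd_ge (pdlt_one_iff.2 h) (by omega)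

lemma pd_retract (i : A →ₗ[R] B) (r : B →ₗ[R] A) (h : r ∘ₗ i = LinearMap.id) {n : ℕ}
    (hB : PDLT R B n) : PDLT R A n :=
  Retract.hasProjectiveDimensionLT (Y := ModuleCat.of R B)
    { i := ModuleCat.ofHom i, r := ModuleCat.ofHom r
      retract := by ext x; exact LinearMap.congr_fun h x } n

lemma pd_equiv (i : A ≃ₗ[R] B) {n : ℕ} (hB : PDLT R B n) : PDLT R A n :=
  pd_retract i.toLinearMap i.symm.toLinearMap (by ext; simp) hB

lemma pd_ker (g : B →ₗ[R] C) (hg : Function.Surjective g) (n : ℕ)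
    (h2 : PDLT R B n) (h3 : PDLT R C (n+1)) : PDLT R (LinearMap.ker g) n :=
  pd_left (LinearMap.ker g).subtype g Subtype.val_injective hg
    (by intro x; simp) n h2 h3

lemma pd_of_ker (g : B →ₗ[R] C) (hg : Function.Surjective g) (n : ℕ)
    (h1 : PDLT R (LinearMap.ker g) n) (h2 : PDLT R B (n+1)) : PDLT R C (n+1) :=
  pd_right (LinearMap.ker g).subtype g Subtype.val_injective hg
    (by intro x; simp) n h1 h2

end PD

lemma pdLE_iff (R : Type u) [Ring R] (n : ℕ) (M : ModuleCat.{u} R) :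
    pdLE R n M ↔ PDLT R M (n+1) := by
  induction n generalizing M with
  | zero => exact projective_iff_hasProjectiveDimensionLT_one
  | succ n ih =>
    constructor
    · rintro (h | ⟨K, P, i, p, hP, hi, hp, hex, hK⟩)
      · exact pd_ge (projective_iff_hasProjectiveDimensionLT_one.1 h) (by omega)
      · exact pd_right i.hom p.hom hi hp hex (n+1) ((ih K).1 hK)
          (pd_ge (projective_iff_hasProjectiveDimensionLT_one.1 hP) (by omega))
    · intro h
      right
      have hg : Function.Surjective (Finsupp.linearCombination R (id : M → M)) :=
        Finsupp.linearCombination_id_surjective R M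
      refine ⟨ModuleCat.of R (LinearMap.ker (Finsupp.linearCombination R (id : M → M))),
        ModuleCat.of R (M →₀ R), ModuleCat.ofHom (Submodule.subtype _),
        ModuleCat.ofHom (Finsupp.linearCombination R (id : M → M)), ?_, Subtype.val_injective,
        hg, ?_, (ih _).2 ?_⟩
      · exact (IsProjective.iff_projective (R := R) (M →₀ R)).1 inferInstance
      · intro x
        simp
      · exact pd_ker _ hg (n+1) (pd_proj inferInstance n) h

lemma exists_cover (R : Type u) [Ring R] (M : Type u) [AddCommGroup M] [Module R M] :
    ∃ (F : Type u) (_ : AddCommGroup F) (_ : Module R F) (g : F →ₗ[R] M),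
      Module.Projective R F ∧ Function.Surjective g :=
  ⟨M →₀ R, inferInstance, inferInstance, Finsupp.linearCombination R (id : M → M), inferInstance,
    Finsupp.linearCombination_id_surjective R M⟩

lemma projective_finsupp {R : Type u} [Ring R] (X : Type u) (M : Type u) [AddCommGroup M]
    [Module R M] (h : Module.Projective R M) : Module.Projective R (X →₀ M) := by
  classical
  exact Module.Projective.of_equiv (finsuppLequivDFinsupp (ι := X) (M := M) R).symm

lemma pd_finsupp {R : Type u} [Ring R] (X : Type u) (n : ℕ) (M : Type u) [AddCommGroup M]
    [Module R M] (h : PDLT R M (n+1)) : PDLT R (X →₀ M) (n+1) := by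
  induction n generalizing M with
  | zero =>
    rw [zero_add, pdlt_one_iff] at *
    exact projective_finsupp X M h
  | succ n ih =>
    obtain ⟨F, _, _, g, hF, hg⟩ := exists_cover R M
    have hk := ih _ (pd_ker _ hg (n+1) (pd_proj hF n) h)
    refine pd_right (A := X →₀ LinearMap.ker g) (B := X →₀ F) (C := X →₀ M)
      (Finsupp.mapRange.linearMap (α := X) (LinearMap.ker g).subtype)
      (Finsupp.mapRange.linearMap (α := X) g)
      ?_ ?_ ?_ (n+1) hk (pd_proj (projective_finsupp X F hF) (n+1))
    · exact Finsupp.mapRange_injective _ (map_zero _) Subtype.val_injective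
    · exact Finsupp.mapRange_surjective _ (map_zero _) hg
    · rw [LinearMap.exact_iff, Finsupp.ker_mapRange, Finsupp.range_mapRange_linearMap]
      · simp
      · simp

lemma pd_change {R : Type u} [Ring R] {C : Type u} [Ring C] [Module R C] [IsScalarTower R C C]
    (p : ℕ) (hp : PDLT R C (p+1)) (n : ℕ) (N : Type u) [AddCommGroup N] [Module C N] [Module R N]
    [IsScalarTower R C N] (h : PDLT C N (n+1)) : PDLT R N (n+p+1) := by
  induction n generalizing N with
  | zero =>
    rw [zero_add, pdlt_one_iff] at h
    obtain ⟨s, hs⟩ := Module.projective_lifting_property (Finsupp.linearCombination C (id : N → N))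
      LinearMap.id (Finsupp.linearCombination_id_surjective C N)
    refine pd_retract (s.restrictScalars R)
      ((Finsupp.linearCombination C (id : N → N)).restrictScalars R) ?_
      (pd_finsupp N (0+p) C (by simpa using hp))
    ext x
    exact LinearMap.congr_fun hs x
  | succ n ih =>
    have hg : Function.Surjective (Finsupp.linearCombination C (id : N → N)) :=
        Finsupp.linearCombination_id_surjective C N
    have hk := ih _ (pd_ker _ hg (n+1) (pd_proj inferInstance n) h)
    have := pd_of_ker ((Finsupp.linearCombination C (id : N → N)).restrictScalars R) hg
      (n+p+1) hk (pd_ge (pd_finsupp N p C hp) (by omega))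
    exact pd_ge this (by omega)

section Idem
variable {Λ : Type u} [Ring Λ] {B : Type u} [Ring B]

/-- The `e`-part `eM` of a module, `e = j 1`. -/
def ePart (j : B →ₙ+* Λ) (M : Type u) [AddCommGroup M] [Module Λ M] : AddSubgroup M where
  carrier := {m | j 1 • m = m}
  zero_mem' := by simp
  add_mem' := by intro x y hx hy; simp only [Set.mem_setOf_eq, smul_add] at *; rw [hx, hy]
  neg_mem' := by intro x hx; simp only [Set.mem_setOf_eq, smul_neg] at *; rw [hx]

variable (j : B →ₙ+* Λ) {M : Type u} [AddCommGroup M] [Module Λ M]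

lemma mem_ePart {m : M} : m ∈ ePart j M ↔ j 1 • m = m := Iff.rfl

lemma smul_mem_ePart (b : B) (m : M) : j b • m ∈ ePart j M := by
  rw [mem_ePart, smul_smul, ← map_mul, one_mul]

instance ePartModule : Module B (ePart j M) where
  smul b m := ⟨j b • (m : M), smul_mem_ePart j b (m : M)⟩
  one_smul m := Subtype.ext m.2
  mul_smul b c m := Subtype.ext (by
    change j (b * c) • (m : M) = j b • j c • (m : M)
    rw [map_mul, mul_smul])
  smul_zero b := Subtype.ext (smul_zero (A := M) (j b))
  smul_add b x y := Subtype.ext (smul_add (j b) (x : M) (y : M))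
  add_smul b c m := Subtype.ext (by
    change j (b + c) • (m : M) = j b • (m : M) + j c • (m : M)
    rw [map_add, add_smul])
  zero_smul m := Subtype.ext (by
    change j 0 • (m : M) = 0
    rw [map_zero, zero_smul])

lemma ePart_coe_smul (b : B) (m : ePart j M) : ((b • m : ePart j M) : M) = j b • (m : M) := rfl

/-- functoriality of `ePart` -/
def ePartMap {N : Type u} [AddCommGroup N] [Module Λ N] (f : M →ₗ[Λ] N) :
    ePart j M →ₗ[B] ePart j N where
  toFun m := ⟨f m, by rw [mem_ePart, ← map_smul, m.2]⟩
  map_add' x y := Subtype.ext (by simp)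
  map_smul' b x := Subtype.ext (by simp [ePart_coe_smul])

/-- The module `(Λe)^(X)`. -/
def freeE (X : Type u) : Submodule Λ (X →₀ Λ) where
  carrier := {f | ∀ x, f x * j 1 = f x}
  zero_mem' := by simp
  add_mem' := by intro f g hf hg x; simp [add_mul, hf x, hg x]
  smul_mem' := by intro c f hf x; simp [mul_assoc, hf x]

lemma jone_idem : j 1 * j 1 = j 1 := by rw [← map_mul, one_mul]

lemma freeE_projective (X : Type u) : Module.Projective Λ (freeE j X) := by
  let r0 : Λ →ₗ[Λ] Λ := LinearMap.toSpanSingleton Λ Λ (j 1)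
  let r : (X →₀ Λ) →ₗ[Λ] freeE j X := (Finsupp.mapRange.linearMap r0).codRestrict (freeE j X)
    (by intro f x; simp [r0, mul_assoc, jone_idem])
  refine Module.Projective.of_split (freeE j X).subtype r ?_
  ext f x
  have : ((r f : freeE j X) : X →₀ Λ) x = (f : X →₀ Λ) x * j 1 := by
    change (Finsupp.mapRange.linearMap r0 (f : X →₀ Λ)) x = _
    simp [r0]
  exact this.trans (f.2 x)

/-- `e (Λe)^(X)` is free over the corner. -/
lemma ePart_freeE_projective (hinj : Function.Injective j)
    (hsurj : ∀ x, j 1 * x * j 1 = x → ∃ b, j b = x) (X : Type u) :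
    Module.Projective B (ePart j (freeE j X)) := by
  let t : (X →₀ B) →ₗ[B] ePart j (freeE j X) :=
    { toFun := fun q => ⟨⟨q.mapRange j (map_zero j), by
          intro x; simp [← map_mul]⟩, by
          rw [mem_ePart]; ext x; simp [← map_mul]⟩
      map_add' := by intro q r; ext x; simp
      map_smul' := by intro b q; ext x; simp [ePart_coe_smul] }
  refine Module.Projective.of_equiv (LinearEquiv.ofBijective t ⟨?_, ?_⟩)
  · intro q r hqr
    have : q.mapRange j (map_zero j) = r.mapRange j (map_zero j) :=
      congrArg (fun z : ePart j (freeE j X) => ((z : freeE j X) : X →₀ Λ)) hqr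
    exact Finsupp.mapRange_injective _ (map_zero j) hinj this
  · rintro ⟨⟨f, hf⟩, hf'⟩
    have h1 : ∀ x, j 1 * f x = f x := by
      intro x
      have := congrArg (fun z : freeE j X => (z : X →₀ Λ) x) hf'
      simpa using this
    have h2 : ∀ x, ∃ b, j b = f x := fun x => hsurj _ (by rw [h1, hf x])
    choose g hg using h2
    refine ⟨Finsupp.onFinset f.support g ?_, ?_⟩
    · intro x hx
      rw [Finsupp.mem_support_iff, ← hg]
      intro h0
      exact hx (hinj (by rw [h0, map_zero]))
    · ext x
      simpa [t] using hg x

/-- the map out of `(Λe)^(X)` given by elements -/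
def freeEMap {X : Type u} (f : X → M) : freeE j X →ₗ[Λ] M :=
  (Finsupp.linearCombination Λ f).comp (freeE j X).subtype

lemma freeEMap_single (f : ePart j M → M) (hf : ∀ x, f x ∈ ePart j M) (m : ePart j M) :
    ∃ y : ePart j (freeE j (ePart j M)), freeEMap j f y = f m := by
  refine ⟨⟨⟨Finsupp.single m (j 1), ?_⟩, ?_⟩, ?_⟩
  · intro x
    classical
    rw [Finsupp.single_apply]
    split_ifs <;> simp [jone_idem]
  · rw [mem_ePart]
    ext x
    simp [jone_idem]
  · have := (mem_ePart j).1 (hf m)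
    simpa [freeEMap] using this

/-- Gluing -/
lemma pd_glue {P : Type u} [AddCommGroup P] [Module Λ P] (hP : Module.Projective Λ P) (c n : ℕ)
    (hc : ∀ (N : Type u) [AddCommGroup N] [Module Λ N], (∀ x : N, j 1 • x = 0) → PDLT Λ N c)
    (φ : P →ₗ[Λ] M) (hφ : ∀ m : ePart j M, (m : M) ∈ LinearMap.range φ)
    (hcn : c ≤ n + 1) (hk : PDLT Λ (LinearMap.ker φ) n) : PDLT Λ M (n+1) := by
  have h1 : PDLT Λ (LinearMap.range φ) (n+1) := by
    refine pd_of_ker φ.rangeRestrict φ.surjective_rangeRestrict n ?_ (pd_proj hP n)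
    rwa [LinearMap.ker_rangeRestrict]
  refine pd_mid (LinearMap.range φ).subtype (LinearMap.range φ).mkQ Subtype.val_injective
    (Submodule.mkQ_surjective _) (LinearMap.exact_subtype_mkQ _) (n+1) h1 (pd_ge (hc _ ?_) hcn)
  intro x
  obtain ⟨m, rfl⟩ := Submodule.mkQ_surjective _ x
  rw [← map_smul, Submodule.mkQ_apply, Submodule.Quotient.mk_eq_zero]
  exact hφ ⟨_, smul_mem_ePart j 1 m⟩

lemma exists_freeE (hinj : Function.Injective j)
    (hsurj : ∀ x, j 1 * x * j 1 = x → ∃ b, j b = x) (M : Type u) [AddCommGroup M] [Module Λ M] :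
    ∃ (P : Type u) (_ : AddCommGroup P) (_ : Module Λ P) (φ : P →ₗ[Λ] M),
      Module.Projective Λ P ∧ Module.Projective B (ePart j P) ∧
      Function.Surjective (ePartMap j φ) ∧
      ∀ s : ePart j M →ₗ[B] ePart j P, ∃ ψ : P →ₗ[Λ] P,
        (∀ y : ePart j P, ψ y = (s (ePartMap j φ y) : P)) ∧
        ∀ p, ψ p ∈ Submodule.span Λ (Set.range fun m => (s m : P)) := by
  let X : Type u := ePart j M
  let φ : freeE j X →ₗ[Λ] M := freeEMap j (fun x : X => (x : M))
  have hφs : Function.Surjective (ePartMap j (M := freeE j (ePart j M)) (N := M) φ) := by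
    intro m
    obtain ⟨y, hy⟩ := freeEMap_single j (fun x : X => (x : M)) (fun x => x.2) m
    exact ⟨y, Subtype.ext hy⟩
  refine ⟨freeE j X, inferInstance, inferInstance, φ, freeE_projective j X,
    ePart_freeE_projective j hinj hsurj X, hφs, ?_⟩
  intro s
  let ψ : freeE j X →ₗ[Λ] freeE j X := freeEMap j (fun x : X => (s x : freeE j X))
  have hψ : ∀ p : freeE j X, ψ p =
      ∑ x ∈ (p : X →₀ Λ).support, (p : X →₀ Λ) x • (s x : freeE j X) := by
    intro p
    simp [ψ, freeEMap, Finsupp.linearCombination_apply, Finsupp.sum]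
  refine ⟨ψ, ?_, ?_⟩
  · rintro ⟨⟨f, hf⟩, hf'⟩
    have h1 : ∀ x, j 1 * f x = f x := by
      intro x
      have := congrArg (fun z : freeE j X => (z : X →₀ Λ) x) hf'
      simpa using this
    have h2 : ∀ x, ∃ b, j b = f x := fun x => hsurj _ (by rw [h1, hf x])
    choose g hg using h2
    have e1 : ePartMap j (M := freeE j (ePart j M)) (N := M) φ ⟨⟨f, hf⟩, hf'⟩
        = ∑ x ∈ f.support, g x • x := by
      apply Subtype.ext
      rw [AddSubgroup.val_finsetSum]
      simp only [ePartMap, φ, freeEMap, Finsupp.linearCombination_apply, Finsupp.sum,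
        LinearMap.coe_mk, AddHom.coe_mk, LinearMap.comp_apply, Submodule.subtype_apply]
      exact Finset.sum_congr rfl (fun x _ => by rw [ePart_coe_smul, hg])
    rw [e1, map_sum, AddSubgroup.val_finsetSum]
    simp [ψ, freeEMap, Finsupp.linearCombination_apply, Finsupp.sum, ePart_coe_smul, hg]
  · intro p
    rw [hψ]
    exact Submodule.sum_mem _ fun x _ => Submodule.smul_mem _ _ (Submodule.subset_span ⟨x, rfl⟩)

lemma pd_base (c : ℕ)
    (hc : ∀ (N : Type u) [AddCommGroup N] [Module Λ N], (∀ x : N, j 1 • x = 0) → PDLT Λ N c)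
    (hinj : Function.Injective j)
    (hsurj : ∀ x, j 1 * x * j 1 = x → ∃ b, j b = x)
    (hM : Module.Projective B (ePart j M)) : PDLT Λ M (c+1) := by
  obtain ⟨P, _, _, φ, hPp, -, hφs, hex⟩ := exists_freeE j hinj hsurj M
  obtain ⟨s, hs⟩ := Module.projective_lifting_property (ePartMap j φ) LinearMap.id hφs
  have hs' : ∀ m : ePart j M, φ (s m : P) = m := fun m =>
    congrArg Subtype.val (LinearMap.congr_fun hs m)
  obtain ⟨ψ, key, hspan⟩ := hex s
  have keys : ∀ m : ePart j M, ψ (s m : P) = (s m : P) := by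
    intro m
    rw [key]
    congr 2
    exact LinearMap.congr_fun hs m
  have hidem : ∀ p ∈ LinearMap.range ψ, ψ p = p := by
    rintro _ ⟨p, rfl⟩
    have hle : Submodule.span Λ (Set.range fun m => (s m : P)) ≤
        LinearMap.eqLocus ψ LinearMap.id := by
      rw [Submodule.span_le]
      rintro _ ⟨m, rfl⟩
      exact keys m
    exact hle (hspan p)
  have hP : Module.Projective Λ (LinearMap.range ψ) := by
    refine Module.Projective.of_split (LinearMap.range ψ).subtype ψ.rangeRestrict ?_
    ext1 p
    exact Subtype.ext (hidem p p.2)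
  refine pd_glue j hP c c hc (φ.comp (LinearMap.range ψ).subtype) ?_ (by omega) (hc _ ?_)
  · intro m
    exact ⟨⟨s m, _, keys m⟩, hs' m⟩
  · rintro ⟨⟨y, hy⟩, hyk⟩
    have hyk' : φ y = 0 := hyk
    apply Subtype.ext
    apply Subtype.ext
    change j 1 • y = 0
    have h3 := key ⟨j 1 • y, smul_mem_ePart j 1 y⟩
    have h4 : ePartMap j φ ⟨j 1 • y, smul_mem_ePart j 1 y⟩ = 0 := by
      apply Subtype.ext
      change φ (j 1 • y) = 0
      rw [map_smul, hyk', smul_zero]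
    rw [h4, map_zero] at h3
    change ψ (j 1 • y) = 0 at h3
    rwa [map_smul, hidem y hy] at h3

lemma pd_main (c : ℕ)
    (hc : ∀ (N : Type u) [AddCommGroup N] [Module Λ N], (∀ x : N, j 1 • x = 0) → PDLT Λ N c)
    (hinj : Function.Injective j)
    (hsurj : ∀ x, j 1 * x * j 1 = x → ∃ b, j b = x) (n : ℕ) (M : Type u) [AddCommGroup M]
    [Module Λ M] (hM : PDLT B (ePart j M) (n+1)) : PDLT Λ M (n+c+1) := by
  induction n generalizing M with
  | zero =>
    rw [zero_add]
    exact pd_base j c hc hinj hsurj (pdlt_one_iff.1 hM)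
  | succ n ih =>
    obtain ⟨P, _, _, φ, hP, hPe, hφ, -⟩ := exists_freeE j hinj hsurj M
    refine pd_glue j hP c (n+1+c) hc φ ?_ (by omega)
      (pd_ge (ih (LinearMap.ker φ) ?_) (by omega))
    · intro m
      obtain ⟨y, hy⟩ := hφ m
      exact ⟨_, congrArg Subtype.val hy⟩
    · refine pd_left (ePartMap j (LinearMap.ker φ).subtype) (ePartMap j φ) ?_ hφ ?_ (n+1)
        (pd_proj hPe n) hM
      · intro x y hxy
        apply Subtype.ext
        apply Subtype.ext
        exact congrArg (fun z : ePart j P => (z : P)) hxy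
      · intro y
        constructor
        · intro h
          have h' : φ y = 0 := congrArg Subtype.val h
          exact ⟨⟨⟨y, h'⟩, Subtype.ext y.2⟩, rfl⟩
        · rintro ⟨x, rfl⟩
          exact Subtype.ext x.1.2

end Idem

lemma pd_killed (Λ : Type u) [Ring Λ] (e : Λ) (b p : ℕ)
    (hb : gldimLE (TwoSidedIdeal.span ({e} : Set Λ)).ringCon.Quotient b)
    (hp : pdLE Λ p
      (@ModuleCat.of Λ _ (TwoSidedIdeal.span ({e} : Set Λ)).ringCon.Quotient _
        (quotSpanModule _ _))) (N : Type u) [AddCommGroup N] [Module Λ N]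
    (hN : ∀ x : N, e • x = 0) : PDLT Λ N (b+p+1) := by
  let I := TwoSidedIdeal.span ({e} : Set Λ)
  have hI : I ≤ TwoSidedIdeal.ker (Module.toAddMonoidEnd Λ N) := by
    rw [TwoSidedIdeal.span_le]
    rintro _ rfl
    rw [SetLike.mem_coe, TwoSidedIdeal.mem_ker]
    ext x
    exact hN x
  let F : I.ringCon.Quotient →+* AddMonoid.End N :=
    RingCon.lift I.ringCon (Module.toAddMonoidEnd Λ N) (by
      intro x y hxy
      have h1 : x - y ∈ I := (TwoSidedIdeal.rel_iff _ _ _).1 hxy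
      have h2 := (TwoSidedIdeal.mem_ker _).1 (hI h1)
      rw [map_sub, sub_eq_zero] at h2
      exact h2)
  letI m1 : Module I.ringCon.Quotient N := Module.compHom N F
  letI m2 : Module Λ I.ringCon.Quotient := quotSpanModule _ _
  have t1 : @IsScalarTower Λ I.ringCon.Quotient I.ringCon.Quotient m2.toSMul _ m2.toSMul :=
    @IsScalarTower.mk _ _ _ m2.toSMul _ m2.toSMul
      (fun x y z => mul_assoc (I.ringCon.mk' x) y z)
  have t2 : @IsScalarTower Λ I.ringCon.Quotient N m2.toSMul _ _ :=
    @IsScalarTower.mk _ _ _ m2.toSMul _ _ (fun x y z => by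
      change F (I.ringCon.mk' x * y) z = x • F y z
      rw [map_mul]
      rfl)
  exact @pd_change Λ _ I.ringCon.Quotient _ m2 t1 p ((pdLE_iff _ _ _).1 hp) b N _ m1 _ t2
    ((pdLE_iff _ _ _).1 (hb (ModuleCat.of _ N)))

/-- Auslander–Platzeck–Todorov: for a noetherian ring `Λ` and an idempotent `e`,
`gldim Λ ≤ gldim eΛe + gldim Λ/ΛeΛ + pd_Λ(Λ/ΛeΛ) + 1`. -/
theorem stmt11 (Λ : Type u) [Ring Λ] [IsNoetherianRing Λ]
    (e : Λ) (he : IsIdempotentElem e)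
    (a b p : ℕ)
    (ha : @gldimLE (cornerSubring he) (cornerRing he) a)
    (hb : gldimLE (TwoSidedIdeal.span ({e} : Set Λ)).ringCon.Quotient b)
    (hp : pdLE Λ p
      (@ModuleCat.of Λ _ (TwoSidedIdeal.span ({e} : Set Λ)).ringCon.Quotient _
        (quotSpanModule _ _))) :
    gldimLE Λ (a + b + p + 1) := by
  intro M
  rw [pdLE_iff]
  letI : Ring (cornerSubring he) := cornerRing he
  let j : cornerSubring he →ₙ+* Λ :=
    { toFun := fun x => x
      map_mul' := fun _ _ => rfl
      map_zero' := rfl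
      map_add' := fun _ _ => rfl }
  have := pd_main j (b+p+1) (fun N _ _ hN => pd_killed Λ e b p hb hp N hN)
    Subtype.val_injective (fun x hx => ⟨⟨x, hx⟩, rfl⟩) a M
    ((pdLE_iff _ _ _).1 (ha (ModuleCat.of _ (ePart j M))))
  exact pd_ge this (by omega)
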